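/- Every speedable left-c.e. real is ρ-speedable for every real ρ ∈ (0,1) with respect to every one of its left approximations; that is, if a left-c.e. real α is ρ₀-speedable with respect to some left approximation for some ρ₀ ∈ (0,1), then for every ρ ∈ (0,1) and every left approximation (a_n) of α there is a computable speed-up function f with liminf_{n→∞} (α − a_{f(n)})/(α − a_n) ≤ ρ. -/

import Mathlib

/-- A left approximation of `α`: a computable nondecreasing sequence of rationals,
all below `α`, converging to `α`. -/
def LeftApprox (a : ℕ → ℚ) (α : ℝ) : Prop :=
  Computable a ∧ Monotone a ∧ (∀ n, (a n : ℝ) < α) ∧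
    Filter.Tendsto (fun n => (a n : ℝ)) Filter.atTop (nhds α)

/-- A speed-up function: a nondecreasing computable function with `n ≤ f n`. -/
def SpeedupFun (f : ℕ → ℕ) : Prop :=
  Computable f ∧ Monotone f ∧ ∀ n, n ≤ f n

/-- `α` is `ρ`-speedable with respect to the left approximation `a`. -/
def RhoSpeedableWrt (α ρ : ℝ) (a : ℕ → ℚ) : Prop :=
  ∃ f : ℕ → ℕ, SpeedupFun f ∧
    Filter.liminf (fun n => (α - (a (f n) : ℝ)) / (α - (a n : ℝ))) Filter.atTop ≤ ρ

/-- `α` is speedable: `ρ`-speedable with respect to some left approximation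
for some `ρ ∈ (0,1)`. -/
def Speedable (α : ℝ) : Prop :=
  ∃ ρ : ℝ, ρ ∈ Set.Ioo (0 : ℝ) 1 ∧ ∃ a : ℕ → ℚ, LeftApprox a α ∧ RhoSpeedableWrt α ρ a

/-!
A real is `ρ`-speedable when some speed-up infinitely often covers about the fraction `1 - ρ` of
the distance `α - a n` still missing. If the fraction `s * t` is attainable in this sense, then so
is `s` or `t`, so if `s ^ k` is attainable for some `k`, then `s` is. Since `s ^ k → 0`, any
positive fraction yields every fraction below `1`. A fraction passes from one left approximation
to another by looking at the place where the second sequence crosses a given term of the first.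
-/

open Filter Encodable

theorem primrec_intEquivNatSumNat : Primrec Equiv.intEquivNatSumNat :=
  Primrec.encode_iff.1 <| Primrec.encode.of_eq fun z => by cases z <;> rfl

theorem primrec_int_natCast : Primrec ((↑) : ℕ → ℤ) :=
  Primrec.encode_iff.1 <| Primrec.nat_double.of_eq fun _ => rfl

theorem primrec_int_negSucc : Primrec Int.negSucc :=
  Primrec.encode_iff.1 <| Primrec.nat_double_succ.of_eq fun _ => rfl

theorem primrec_int_toNat : Primrec Int.toNat :=
  (Primrec.sumCasesOn primrec_intEquivNatSumNat Primrec₂.right (Primrec₂.const 0)).of_eq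
    fun z => by cases z <;> rfl

theorem primrec_int_toNat_neg : Primrec fun z : ℤ => (-z).toNat :=
  (Primrec.sumCasesOn primrec_intEquivNatSumNat (Primrec₂.const 0)
    (Primrec.succ.comp₂ Primrec₂.right)).of_eq fun z => by rcases z with (_ | _) | _ <;> rfl

theorem primrec₂_int_subNatNat : Primrec₂ Int.subNatNat :=
  (Primrec.nat_casesOn (Primrec.nat_sub.comp .snd .fst)
    (primrec_int_natCast.comp <| Primrec.nat_sub.comp .fst .snd)
    (primrec_int_negSucc.comp₂ Primrec₂.right)).of_eq fun p => by
      unfold Int.subNatNat; cases p.2 - p.1 <;> rfl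

theorem primrec₂_int_sub : Primrec₂ ((· - ·) : ℤ → ℤ → ℤ) :=
  (primrec₂_int_subNatNat.comp
    (Primrec.nat_add.comp (primrec_int_toNat.comp .fst) (primrec_int_toNat_neg.comp .snd))
    (Primrec.nat_add.comp (primrec_int_toNat_neg.comp .fst)
      (primrec_int_toNat.comp .snd))).of_eq fun p => by
    rw [Int.subNatNat_eq_coe]
    change _ = p.1 - p.2
    omega

theorem primrec₂_int_mul : Primrec₂ ((· * ·) : ℤ → ℤ → ℤ) :=
  have pos₁ := primrec_int_toNat.comp (Primrec.fst (α := ℤ) (β := ℤ))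
  have neg₁ := primrec_int_toNat_neg.comp (Primrec.fst (α := ℤ) (β := ℤ))
  have pos₂ := primrec_int_toNat.comp (Primrec.snd (α := ℤ) (β := ℤ))
  have neg₂ := primrec_int_toNat_neg.comp (Primrec.snd (α := ℤ) (β := ℤ))
  (primrec₂_int_subNatNat.comp
    (Primrec.nat_add.comp (Primrec.nat_mul.comp pos₁ pos₂) (Primrec.nat_mul.comp neg₁ neg₂))
    (Primrec.nat_add.comp (Primrec.nat_mul.comp pos₁ neg₂)
      (Primrec.nat_mul.comp neg₁ pos₂))).of_eq fun p => by
    rw [Int.subNatNat_eq_coe]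
    push_cast
    linear_combination ((p.2.toNat : ℤ) - (-p.2).toNat) * Int.toNat_sub_toNat_neg p.1 +
      p.1 * Int.toNat_sub_toNat_neg p.2

theorem primrec_int_natAbs : Primrec Int.natAbs :=
  (Primrec.nat_add.comp primrec_int_toNat primrec_int_toNat_neg).of_eq fun z => by omega

theorem primrecRel_int_lt : PrimrecRel ((· < ·) : ℤ → ℤ → Prop) :=
  (Primrec.nat_lt.comp (Primrec.const 0)
    (primrec_int_toNat.comp <| primrec₂_int_sub.comp .snd .fst)).of_eq fun p => by omega

theorem primrec₂_nat_gcd : Primrec₂ Nat.gcd := by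
  have common_dvd : PrimrecRel fun (p : ℕ × ℕ) k => k ∣ p.1 ∧ k ∣ p.2 := by
    simp only [Nat.dvd_iff_mod_eq_zero]
    exact .and (Primrec.eq.comp (Primrec.nat_mod.comp (.comp .fst .fst) .snd) (.const 0))
      (Primrec.eq.comp (Primrec.nat_mod.comp (.comp .snd .fst) .snd) (.const 0))
  refine (Primrec.nat_findGreatest (Primrec.nat_add.comp .fst .snd) common_dvd).of_eq fun p => ?_
  obtain hzero | hpos := (p.1 + p.2).eq_zero_or_pos
  · obtain ⟨h₁, h₂⟩ := Nat.add_eq_zero_iff.1 hzero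
    simp [h₁, h₂]
  refine Nat.findGreatest_eq_iff.2
    ⟨Nat.le_of_dvd hpos (Nat.dvd_add (Nat.gcd_dvd_left ..) (Nat.gcd_dvd_right ..)),
      fun _ => ⟨Nat.gcd_dvd_left .., Nat.gcd_dvd_right ..⟩, fun k hk _ ⟨h₁, h₂⟩ => ?_⟩
  have gcd_eq_zero := Nat.eq_zero_of_dvd_of_lt (Nat.dvd_gcd h₁ h₂) hk
  have := Nat.gcd_eq_zero_iff.1 gcd_eq_zero
  omega

theorem computable_coe_subtypeOfNat {s : Set ℕ} [DecidablePred (· ∈ s)] [Infinite s]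
    (hs : ComputablePred (· ∈ s)) : Computable fun n => (Nat.Subtype.ofNat s n : ℕ) := by
  have exists_next (x : ℕ) : ∃ m, x + m + 1 ∈ s := by
    obtain ⟨y, hy, hxy⟩ := (Set.infinite_coe_iff.1 ‹Infinite s›).exists_gt x
    exact ⟨y - x - 1, by rwa [show x + (y - x - 1) + 1 = y by omega]⟩
  have hgap : Computable fun x => Nat.find (exists_next x) :=
    Computable.find (ComputablePred.computable_of_manyOneReducible
      ⟨_, (Primrec.succ.comp Primrec.nat_add).to_comp, fun _ => Iff.rfl⟩ hs) exists_next
  have hprev : Computable fun p : ℕ × ℕ × ℕ => p.2.2 := .comp .snd .snd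
  refine (Computable.nat_rec Computable.id (Computable.const (Nat.Subtype.ofNat s 0 : ℕ))
    (Computable.succ.comp
      (Primrec.nat_add.to_comp.comp hprev (hgap.comp hprev))).to₂).of_eq fun n => ?_
  induction n with
  | zero => rfl
  | succ n ih => exact congrArg (fun x => x + Nat.find (exists_next x) + 1) ih

theorem encode_ofNat_ofEncodableOfInfinite {α : Type*} [Encodable α] [Infinite α]
    [hdec : DecidablePred (· ∈ Set.range (encode : α → ℕ))]
    [Infinite (Set.range (encode : α → ℕ))] (n : ℕ) :
    encode (@Denumerable.ofNat α (Denumerable.ofEncodableOfInfinite α) n) =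
      (Nat.Subtype.ofNat (Set.range (encode : α → ℕ)) n : ℕ) := by
  obtain rfl : hdec = decidableRangeEncode α := Subsingleton.elim _ _
  exact congrArg Subtype.val ((equivRangeEncode α).apply_symm_apply _)

theorem computable_encode_ofEncodableOfInfinite {α : Type*} [Encodable α] [Infinite α]
    (h : ComputablePred (· ∈ Set.range (encode : α → ℕ))) :
    @Computable α ℕ (@Primcodable.ofDenumerable α (Denumerable.ofEncodableOfInfinite α)) _
      encode := by
  classical
  have : Infinite (Set.range (encode : α → ℕ)) :=
    (Set.infinite_range_of_injective encode_injective).to_subtype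
  let _ := Denumerable.ofEncodableOfInfinite α
  refine ((computable_coe_subtypeOfNat h).comp Computable.encode).of_eq fun x => ?_
  rw [← encode_ofNat_ofEncodableOfInfinite]
  exact congrArg _ (Denumerable.ofNat_encode x)

/- `Primcodable ℚ` does not use the encoding below directly: it numbers the rationals by their rank
in the range of that encoding, so numerators are computable only because the range is decidable. -/
theorem rat_encode_eq_pair (q : ℚ) :
    @encode ℚ Rat.instEncodable q = Nat.pair (encode q.num) q.den := rfl

theorem mem_range_rat_encode_iff (m : ℕ) :
    m ∈ Set.range (@encode ℚ Rat.instEncodable) ↔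
      m.unpair.2 ≠ 0 ∧ (Denumerable.ofNat ℤ m.unpair.1).natAbs.gcd m.unpair.2 = 1 := by
  refine ⟨?_, fun ⟨hden, hred⟩ => ⟨⟨_, _, hden, hred⟩, ?_⟩⟩
  · rintro ⟨q, rfl⟩
    rw [rat_encode_eq_pair, Nat.unpair_pair, Denumerable.ofNat_encode]
    exact ⟨q.den_nz, q.reduced⟩
  · rw [rat_encode_eq_pair, Denumerable.encode_ofNat, Nat.pair_unpair]

theorem computable_rat_encode : Computable (@encode ℚ Rat.instEncodable) := by
  refine computable_encode_ofEncodableOfInfinite (PrimrecPred.computablePred ?_)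
  have hfst : Primrec fun m : ℕ => m.unpair.1 := .comp .fst .unpair
  have hsnd : Primrec fun m : ℕ => m.unpair.2 := .comp .snd .unpair
  refine PrimrecPred.of_eq ?_ fun m => (mem_range_rat_encode_iff m).symm
  exact (Primrec.eq.comp hsnd (.const 0)).not.and
    (Primrec.eq.comp
      (primrec₂_nat_gcd.comp (primrec_int_natAbs.comp <| (Primrec.ofNat ℤ).comp hfst) hsnd)
      (.const 1))

theorem computable_rat_num : Computable Rat.num :=
  ((Primrec.ofNat ℤ).comp (.comp .fst .unpair) |>.to_comp.comp computable_rat_encode).of_eq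
    fun q => by rw [rat_encode_eq_pair, Nat.unpair_pair, Denumerable.ofNat_encode]

theorem computable_rat_den : Computable Rat.den :=
  ((Primrec.snd.comp .unpair).to_comp.comp computable_rat_encode).of_eq
    fun q => by rw [rat_encode_eq_pair, Nat.unpair_pair]

theorem computable_of_computablePred_graph {β γ : Type*} [Primcodable β] [Denumerable γ]
    {f : β → γ} (hf : ComputablePred fun p : β × γ => f p.1 = p.2) : Computable f := by
  classical
  have hex (b : β) : ∃ n, f b = Denumerable.ofNat γ n := ⟨encode (f b), by simp⟩
  have hsearch : Computable fun b => Nat.find (hex b) :=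
    Computable.find (ComputablePred.computable_of_manyOneReducible
      ⟨fun p : β × ℕ => (p.1, Denumerable.ofNat γ p.2),
        Computable.fst.pair ((Primrec.ofNat γ).to_comp.comp .snd), fun _ => Iff.rfl⟩ hf) hex
  exact ((Primrec.ofNat γ).to_comp.comp hsearch).of_eq fun b => (Nat.find_spec (hex b)).symm

theorem computable_mkRat {β : Type*} [Primcodable β] {n : β → ℤ} {d : β → ℕ} (hn : Computable n)
    (hd : Computable d) (hd₀ : ∀ b, d b ≠ 0) : Computable fun b => mkRat (n b) (d b) := by
  have hcross : PrimrecPred fun p : (ℤ × ℕ) × (ℤ × ℕ) => p.1.1 * (p.2.2 : ℤ) = p.2.1 * p.1.2 :=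
    Primrec.eq.comp
      (primrec₂_int_mul.comp (.comp .fst .fst) (primrec_int_natCast.comp <| .comp .snd .snd))
      (primrec₂_int_mul.comp (.comp .fst .snd) (primrec_int_natCast.comp <| .comp .snd .fst))
  refine computable_of_computablePred_graph (ComputablePred.computable_of_manyOneReducible
    ⟨fun p : β × ℚ => ((n p.1, d p.1), (p.2.num, p.2.den)), ?_, fun p => ?_⟩ hcross.computablePred)
  · exact ((hn.comp .fst).pair (hd.comp .fst)).pair
      ((computable_rat_num.comp .snd).pair (computable_rat_den.comp .snd))
  · rw [← Rat.mkRat_eq_iff (hd₀ p.1) p.2.den_nz, Rat.mkRat_self]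

theorem computable₂_rat_mul : Computable₂ ((· * ·) : ℚ → ℚ → ℚ) := by
  simp only [Rat.mul_def']
  exact computable_mkRat
    (primrec₂_int_mul.to_comp.comp (computable_rat_num.comp .fst) (computable_rat_num.comp .snd))
    (Primrec.nat_mul.to_comp.comp (computable_rat_den.comp .fst) (computable_rat_den.comp .snd))
    fun p => mul_ne_zero p.1.den_nz p.2.den_nz

theorem computable₂_rat_num_mul_den :
    Computable₂ fun x y : ℚ => x.num * (y.den : ℤ) :=
  primrec₂_int_mul.to_comp.comp (computable_rat_num.comp .fst)
    (primrec_int_natCast.to_comp.comp <| computable_rat_den.comp .snd)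

theorem computable₂_rat_sub : Computable₂ ((· - ·) : ℚ → ℚ → ℚ) := by
  simp only [Rat.sub_def']
  exact computable_mkRat
    (primrec₂_int_sub.to_comp.comp computable₂_rat_num_mul_den
      (computable₂_rat_num_mul_den.comp .snd .fst))
    (Primrec.nat_mul.to_comp.comp (computable_rat_den.comp .fst) (computable_rat_den.comp .snd))
    fun p => mul_ne_zero p.1.den_nz p.2.den_nz

theorem computablePred_rat_lt : ComputablePred fun p : ℚ × ℚ => p.1 < p.2 :=
  ComputablePred.computable_of_manyOneReducible
    ⟨_, computable₂_rat_num_mul_den.pair (computable₂_rat_num_mul_den.comp .snd .fst),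
      fun p => Rat.lt_iff p.1 p.2⟩
    primrecRel_int_lt.computablePred

theorem exists_speedupFun_ge {g : ℕ → ℕ} (hg : Computable g) :
    ∃ F, SpeedupFun F ∧ ∀ n, g n ≤ F n := by
  let F (n : ℕ) : ℕ := Nat.rec (g 0) (fun k Fk => Fk + g (k + 1) + 1) n
  have F_succ (n : ℕ) : F (n + 1) = F n + g (n + 1) + 1 := rfl
  have F_computable : Computable F :=
    .nat_rec .id (.const _) (Computable.succ.comp <| Primrec.nat_add.to_comp.comp
      (.comp .snd .snd) (hg.comp <| Computable.succ.comp <| .comp .fst .snd)).to₂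
  have F_strictMono : StrictMono F := strictMono_nat_of_lt_succ fun n => by rw [F_succ]; omega
  refine ⟨F, ⟨F_computable, F_strictMono.monotone, fun _ => F_strictMono.le_apply⟩, fun n => ?_⟩
  cases n with
  | zero => exact le_rfl
  | succ n => rw [F_succ]; omega

theorem exists_computable_of_eventually_exists {P : ℕ → ℕ → Prop}
    (hP : ComputablePred fun p : ℕ × ℕ => P p.1 p.2) (hex : ∀ᶠ n in atTop, ∃ m, P n m) :
    ∃ g, Computable g ∧ ∀ᶠ n in atTop, P n (g n) := by
  classical
  obtain ⟨N, hN⟩ := eventually_atTop.1 hex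
  have hmax : Computable fun p : ℕ × ℕ => (max p.1 N, p.2) :=
    (Primrec.nat_max.comp .fst (.const N)).to_comp.pair .snd
  refine ⟨_, Computable.find (P := fun n m => P (max n N) m)
    (ComputablePred.computable_of_manyOneReducible ⟨_, hmax, fun _ => Iff.rfl⟩ hP)
    fun n => hN _ (le_max_right n N), eventually_atTop.2 ⟨N, fun n hn => ?_⟩⟩
  simpa only [max_eq_left hn] using Nat.find_spec (hN _ (le_max_right n N))

theorem exists_lt_le_succ {β : Type*} [LinearOrder β] {u : ℕ → β} {x : β} {N k : ℕ} (hNk : N ≤ k)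
    (hN : u N < x) (hk : x ≤ u k) : ∃ n ≥ N, u n < x ∧ x ≤ u (n + 1) := by
  by_contra! h
  exact hk.not_gt (Nat.le_induction hN (fun n hn hlt => h n hn hlt) k hNk)

section

variable {α s t : ℝ} {a b : ℕ → ℚ}

namespace LeftApprox

theorem exists_gt (ha : LeftApprox a α) {x : ℝ} (hx : x < α) : ∃ n, x < a n :=
  (ha.2.2.2.eventually_const_lt hx).exists

theorem exists_computable_lt (ha : LeftApprox a α) (hb : LeftApprox b α) :
    ∃ u : ℕ → ℕ, Computable u ∧ ∀ n, a n < b (u n) := by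
  classical
  have hex (n : ℕ) : ∃ m, a n < b m := by exact_mod_cast hb.exists_gt (ha.2.2.1 n)
  exact ⟨_, Computable.find (ComputablePred.computable_of_manyOneReducible
    ⟨_, (ha.1.comp .fst).pair (hb.1.comp .snd), fun _ => Iff.rfl⟩ computablePred_rat_lt) hex,
    fun n => Nat.find_spec (hex n)⟩

end LeftApprox

/-- Infinitely often some speed-up covers at least the fraction `s` of the distance still missing
to `α`. This is `(1 - s)`-speedability up to an arbitrarily small loss in `s`, without the division
and the limit inferior. -/
def HasFrequentGain (α s : ℝ) (a : ℕ → ℚ) : Prop :=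
  ∃ f : ℕ → ℕ, SpeedupFun f ∧ ∃ᶠ n in atTop, s * (α - a n) ≤ a (f n) - a n

theorem RhoSpeedableWrt.hasFrequentGain {ρ : ℝ} (ha : LeftApprox a α) (h : RhoSpeedableWrt α ρ a)
    (hs : s < 1 - ρ) : HasFrequentGain α s a := by
  obtain ⟨f, hf, hliminf⟩ := h
  have ratio_le_one (n : ℕ) : (α - a (f n)) / (α - a n) ≤ 1 := by
    have := ha.2.1 (hf.2.2 n)
    exact (div_le_one (sub_pos.2 (ha.2.2.1 n))).2 (by gcongr)
  have hcobdd : IsCoboundedUnder (· ≥ ·) atTop fun n => (α - (a (f n) : ℝ)) / (α - a n) :=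
    (isBoundedUnder_of ⟨1, ratio_le_one⟩).isCoboundedUnder_ge
  refine ⟨f, hf, (frequently_lt_of_liminf_lt (b := 1 - s) hcobdd (by linarith)).mono fun n hn => ?_⟩
  rw [div_lt_iff₀ (sub_pos.2 (ha.2.2.1 n))] at hn
  linarith

namespace HasFrequentGain

theorem rhoSpeedableWrt {ρ : ℝ} (ha : LeftApprox a α) (h : HasFrequentGain α (1 - ρ) a) :
    RhoSpeedableWrt α ρ a := by
  obtain ⟨f, hf, hgain⟩ := h
  have ratio_nonneg (n : ℕ) : 0 ≤ (α - (a (f n) : ℝ)) / (α - a n) :=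
    div_nonneg (sub_nonneg.2 (ha.2.2.1 _).le) (sub_nonneg.2 (ha.2.2.1 _).le)
  refine ⟨f, hf, liminf_le_of_frequently_le (hgain.mono fun n hn => ?_)
    (isBoundedUnder_of ⟨0, ratio_nonneg⟩)⟩
  rw [div_le_iff₀ (sub_pos.2 (ha.2.2.1 n))]
  linarith

theorem mono (ha : LeftApprox a α) (h : HasFrequentGain α t a) (hst : s ≤ t) :
    HasFrequentGain α s a := by
  obtain ⟨f, hf, hgain⟩ := h
  refine ⟨f, hf, hgain.mono fun n hn => le_trans ?_ hn⟩
  have := (ha.2.2.1 n).le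
  gcongr

theorem of_computable (ha : Monotone a) {g : ℕ → ℕ} (hg : Computable g)
    (hgain : ∃ᶠ n in atTop, s * (α - a n) ≤ a (g n) - a n) : HasFrequentGain α s a := by
  obtain ⟨F, hF, hgF⟩ := exists_speedupFun_ge hg
  refine ⟨F, hF, hgain.mono fun n hn => hn.trans ?_⟩
  have := ha (hgF n)
  gcongr

theorem of_leftApprox (ha : LeftApprox a α) (hb : LeftApprox b α) (hs : s ≤ 1)
    (h : HasFrequentGain α s a) : HasFrequentGain α s b := by
  obtain ⟨f, hf, hgain⟩ := h
  obtain ⟨u, hu, b_lt_a⟩ := hb.exists_computable_lt ha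
  obtain ⟨v, hv, a_lt_b⟩ := ha.exists_computable_lt hb
  refine of_computable hb.2.1 (g := fun n => v (f (u (n + 1))))
    (hv.comp (hf.1.comp (hu.comp .succ))) (frequently_atTop.2 fun N => ?_)
  obtain ⟨m, hm, hNm⟩ :=
    (hgain.and_eventually (ha.2.2.2.eventually_const_lt (hb.2.2.1 N))).exists
  replace hNm : b N < a m := by exact_mod_cast hNm
  obtain ⟨n, hNn, hnm, hmn⟩ : ∃ n ≥ N, b n < a m ∧ a m ≤ b (n + 1) :=
    exists_lt_le_succ (hb.2.1.reflect_lt (hNm.trans (a_lt_b m))).le hNm (a_lt_b m).le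
  have hmu : m ≤ u (n + 1) := (ha.2.1.reflect_lt (hmn.trans_lt (b_lt_a (n + 1)))).le
  have hfm : a (f m) ≤ b (v (f (u (n + 1)))) := (ha.2.1 (hf.2.1 hmu)).trans (a_lt_b _).le
  refine ⟨n, hNn, ?_⟩
  have hrest : α - b (v (f (u (n + 1)))) ≤ (1 - s) * (α - b n) :=
    calc α - b (v (f (u (n + 1)))) ≤ α - a (f m) := by gcongr
      _ ≤ (1 - s) * (α - a m) := by linarith
      _ ≤ (1 - s) * (α - b n) := by gcongr
  linarith

/- If `f` does not have gain `s`, then eventually `a (f n) - a n < s * (α - a n)`, and `α` can be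
replaced here by a term `a (g n)` found by search; cancelling `s`, the function `g` has gain `t`. -/
theorem or_of_mul (ha : LeftApprox a α) {s : ℚ} (hs : 0 < s) (h : HasFrequentGain α (s * t) a) :
    HasFrequentGain α s a ∨ HasFrequentGain α t a := by
  obtain ⟨f, hf, hgain⟩ := h
  refine or_iff_not_imp_left.2 fun hnot => ?_
  have hs' : (0 : ℝ) < s := by exact_mod_cast hs
  have hlt : ∀ᶠ n in atTop, (a (f n) - a n : ℝ) < s * (α - a n) := by
    by_contra hfreq
    exact hnot ⟨f, hf, by simpa only [not_eventually, not_lt] using hfreq⟩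
  have hex : ∀ᶠ n in atTop, ∃ m, a (f n) - a n < s * (a m - a n) := hlt.mono fun n hn => by
    obtain ⟨m, hm⟩ := ha.exists_gt (lt_sub_iff_add_lt.1 ((div_lt_iff₀' hs').2 hn))
    rw [← lt_sub_iff_add_lt, div_lt_iff₀' hs'] at hm
    exact ⟨m, by exact_mod_cast hm⟩
  have hdec : ComputablePred fun p : ℕ × ℕ => a (f p.1) - a p.1 < s * (a p.2 - a p.1) :=
    have hfst := ha.1.comp (Computable.fst (α := ℕ) (β := ℕ))
    ComputablePred.computable_of_manyOneReducible
      ⟨_, (computable₂_rat_sub.comp (ha.1.comp (hf.1.comp .fst)) hfst).pair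
        (computable₂_rat_mul.comp (.const s) (computable₂_rat_sub.comp (ha.1.comp .snd) hfst)),
        fun _ => Iff.rfl⟩ computablePred_rat_lt
  obtain ⟨g, hg, hfg⟩ := exists_computable_of_eventually_exists hdec hex
  refine of_computable ha.2.1 hg ((hgain.and_eventually hfg).mono fun n ⟨hn, hfgn⟩ => ?_)
  replace hfgn : (a (f n) - a n : ℝ) < s * (a (g n) - a n) := by exact_mod_cast hfgn
  refine le_of_mul_le_mul_left ?_ hs'
  calc s * (t * (α - a n)) = s * t * (α - a n) := (mul_assoc ..).symm
    _ ≤ a (f n) - a n := hn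
    _ ≤ s * (a (g n) - a n) := hfgn.le

theorem of_pow (ha : LeftApprox a α) {s : ℚ} (hs₀ : 0 < s) (hs₁ : s ≤ 1) (k : ℕ)
    (h : HasFrequentGain α ((s : ℝ) ^ k) a) : HasFrequentGain α s a := by
  induction k with
  | zero => exact h.mono ha (by rw [pow_zero]; exact_mod_cast hs₁)
  | succ k ih =>
    rw [pow_succ'] at h
    exact (h.or_of_mul ha hs₀).elim id ih

end HasFrequentGain

end

theorem speedable_independent_of_rho_and_approx (α : ℝ) (h : Speedable α)
    (ρ : ℝ) (hρ : ρ ∈ Set.Ioo (0 : ℝ) 1) (a : ℕ → ℚ) (ha : LeftApprox a α) :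
    RhoSpeedableWrt α ρ a := by
  obtain ⟨ρ₀, ⟨-, hρ₀⟩, b, hb, hspeed⟩ := h
  obtain ⟨s, hρs, hs⟩ : ∃ s : ℚ, 1 - ρ < s ∧ (s : ℝ) < 1 := exists_rat_btwn (by linarith [hρ.1])
  have hs₀ : (0 : ℝ) < s := (sub_pos.2 hρ.2).trans hρs
  obtain ⟨k, hk⟩ : ∃ k, (s : ℝ) ^ k < 1 - ρ₀ := exists_pow_lt_of_lt_one (sub_pos.2 hρ₀) hs
  have gain_b : HasFrequentGain α ((s : ℝ) ^ k) b := hspeed.hasFrequentGain hb hk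
  have gain_a : HasFrequentGain α ((s : ℝ) ^ k) a :=
    gain_b.of_leftApprox hb ha (pow_le_one₀ hs₀.le hs.le)
  have gain_root : HasFrequentGain α s a :=
    gain_a.of_pow ha (by exact_mod_cast hs₀) (by exact_mod_cast hs.le) k
  exact (gain_root.mono ha hρs.le).rhoSpeedableWrt ha
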